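/- arXiv:2005.08166 — 2 statements merged into one kernel-verified Lean document; each statement's English description precedes it below -/
import Mathlib

section
/- Let 𝔥 ⊆ so(n) be a subalgebra, let ℝ^{n₀} := {v ∈ ℝⁿ : Av = 0 for all A ∈ 𝔥} be the subspace on which 𝔥 acts trivially, and let (ℝ^{n₀})^⊥ be its orthogonal complement in ℝⁿ. Let θ₁ : 𝔥 → ℝ be a linear map with θ₁|_{[𝔥,𝔥]} = 0 and θ₂ : ℝ^{n₀} → ℝ a linear map, and set 𝔤 := {(θ₁(A) + θ₂(X), 0, A, X + Y) : A ∈ 𝔥, X ∈ ℝ^{n₀}, Y ∈ (ℝ^{n₀})^⊥} ⊆ co(1,n+1)_{ℝp}. If 𝔤 is a Berger algebra, then θ₂ = 0. -/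
open Module

noncomputable section

namespace Weyl

variable {V : Type*} [AddCommGroup V] [Module ℝ V]

/-- The endomorphism `X ∧ Y : Z ↦ B(X,Z)•Y − B(Y,Z)•X`. -/
def wedge (B : LinearMap.BilinForm ℝ V) (X Y : V) : Module.End ℝ V where
  toFun Z := B X Z • Y - B Y Z • X
  map_add' z z' := by simp only [map_add, add_smul]; abel
  map_smul' c z := by simp only [map_smul, smul_eq_mul, RingHom.id_apply, mul_smul, smul_sub]

/-- The Lie algebra `so(B)` of endomorphisms skew-symmetric with respect to `B`. -/
def soSet (B : LinearMap.BilinForm ℝ V) : Set (Module.End ℝ V) :=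
  {A | ∀ x y, B (A x) y + B x (A y) = 0}

/-- The conformal Lie algebra `co(B) = ℝ·id ⊕ so(B)`. -/
def coSet (B : LinearMap.BilinForm ℝ V) : Set (Module.End ℝ V) :=
  {F | ∃ c : ℝ, ∃ S ∈ soSet B, F = c • (1 : Module.End ℝ V) + S}

/-- The first prolongation `g^{(1)}` of a set of endomorphisms:
linear maps `φ : V → g` with `φ(X)Y = φ(Y)X`. -/
def firstProlong (g : Set (Module.End ℝ V)) : Set (V →ₗ[ℝ] Module.End ℝ V) :=
  {φ | (∀ x, φ x ∈ g) ∧ ∀ x y, φ x y = φ y x}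

/-- `R` is an algebraic curvature tensor of type `g` (a linear map on `Λ²V`,
encoded as an antisymmetric bilinear map, with values in `g`, satisfying the
Bianchi identity). -/
def IsCurv (g : Set (Module.End ℝ V)) (R : V →ₗ[ℝ] V →ₗ[ℝ] Module.End ℝ V) : Prop :=
  (∀ x y, R x y = - R y x) ∧ (∀ x y, R x y ∈ g) ∧
    ∀ x y z, R x y z + R y z x + R z x y = 0

/-- `L(ℛ(g))`: the span of all values of algebraic curvature tensors of type `g`. -/
def curvSpan (g : Set (Module.End ℝ V)) : Submodule ℝ (Module.End ℝ V) :=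
  Submodule.span ℝ {F | ∃ R, IsCurv g R ∧ ∃ x y, F = R x y}

/-- `g` is a Berger algebra: `L(ℛ(g)) = g`. -/
def IsBerger (g : Set (Module.End ℝ V)) : Prop :=
  (curvSpan g : Set (Module.End ℝ V)) = g

/-- `g` is (the underlying set of) a Lie subalgebra of `gl(V)`. -/
def IsLieSub (g : Set (Module.End ℝ V)) : Prop :=
  (0 : Module.End ℝ V) ∈ g ∧ (∀ F ∈ g, ∀ F' ∈ g, F + F' ∈ g) ∧
    (∀ (c : ℝ), ∀ F ∈ g, c • F ∈ g) ∧ ∀ F ∈ g, ∀ F' ∈ g, F * F' - F' * F ∈ g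

/-- The subspace `W` is invariant under every element of `g`. -/
def Invariant (g : Set (Module.End ℝ V)) (W : Submodule ℝ V) : Prop :=
  ∀ F ∈ g, ∀ x ∈ W, F x ∈ W

/-- The restriction of `B` to `W` is nondegenerate. -/
def IsNondegOn (B : LinearMap.BilinForm ℝ V) (W : Submodule ℝ V) : Prop :=
  ∀ x ∈ W, (∀ y ∈ W, B x y = 0) → x = 0

/-- Weak irreducibility: no proper nonzero invariant nondegenerate subspace. -/
def WeaklyIrred (B : LinearMap.BilinForm ℝ V) (g : Set (Module.End ℝ V)) : Prop :=
  ∀ W : Submodule ℝ V, Invariant g W → IsNondegOn B W → W = ⊥ ∨ W = ⊤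

/-- Irreducibility: no proper nonzero invariant subspace. -/
def Irred (g : Set (Module.End ℝ V)) : Prop :=
  ∀ W : Submodule ℝ V, Invariant g W → W = ⊥ ∨ W = ⊤

/-- The Euclidean dot product on `Fin n → ℝ`. -/
def dotE (n : ℕ) : LinearMap.BilinForm ℝ (Fin n → ℝ) :=
  LinearMap.mk₂ ℝ (fun x y => ∑ i, x i * y i)
    (fun x x' y => by simp [add_mul, Finset.sum_add_distrib])
    (fun c x y => by simp [Finset.mul_sum, mul_assoc])
    (fun x y y' => by simp [mul_add, Finset.sum_add_distrib])
    (fun c x y => by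
      simp only [Pi.smul_apply, smul_eq_mul, Finset.mul_sum]
      exact Finset.sum_congr rfl fun i _ => by ring)

/-- Minkowski space `ℝ^{1,n+1}` in Witt coordinates: the vector `(v, x, u)`
represents `v·p + x + u·q` with respect to a Witt basis `p, e₁, …, eₙ, q`. -/
abbrev Mink (n : ℕ) := ℝ × (Fin n → ℝ) × ℝ

/-- The Minkowski metric in Witt coordinates: `p, q` are isotropic, `(p,q) = 1`,
and the form is the Euclidean one on the `ℝⁿ`-part orthogonal to `p` and `q`. -/
def minkB (n : ℕ) : LinearMap.BilinForm ℝ (Mink n) :=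
  LinearMap.mk₂ ℝ (fun X Y => X.1 * Y.2.2 + X.2.2 * Y.1 + dotE n X.2.1 Y.2.1)
    (fun X X' Y => by
      simp only [Prod.fst_add, Prod.snd_add, Pi.add_apply, map_add,
        LinearMap.add_apply]
      ring)
    (fun c X Y => by
      simp only [Prod.smul_fst, Prod.smul_snd, smul_eq_mul, map_smul,
        LinearMap.smul_apply]
      ring)
    (fun X Y Y' => by
      simp only [Prod.fst_add, Prod.snd_add, Pi.add_apply, map_add,
        LinearMap.add_apply]
      ring)
    (fun c X Y => by
      simp only [Prod.smul_fst, Prod.smul_snd, smul_eq_mul, map_smul,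
        LinearMap.smul_apply]
      ring)

/-- The Witt basis vector `p`. -/
def pvec (n : ℕ) : Mink n := (1, 0, 0)

/-- The Witt basis vector `q`. -/
def qvec (n : ℕ) : Mink n := (0, 0, 1)

/-- The embedding of `ℝⁿ` into Minkowski space. -/
def emb {n : ℕ} (x : Fin n → ℝ) : Mink n := (0, x, 0)

/-- The element `(b, a, A, X) = b·id + (a, A, X)` of `co(1,n+1)_{ℝp}`:
it maps `p ↦ (a+b)·p`, `U ↦ (X,U)·p + A U + b·U` for `U ∈ ℝⁿ`, and
`q ↦ −X + (b−a)·q`. -/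
def coElem {n : ℕ} (b a : ℝ) (A : Module.End ℝ (Fin n → ℝ)) (X : Fin n → ℝ) :
    Module.End ℝ (Mink n) where
  toFun w := ((b + a) * w.1 + dotE n X w.2.1,
              b • w.2.1 + A w.2.1 - w.2.2 • X,
              (b - a) * w.2.2)
  map_add' w w' := by
    simp only [Prod.fst_add, Prod.snd_add, map_add, Prod.mk_add_mk, add_smul]
    refine Prod.ext (by ring) (Prod.ext ?_ (by ring))
    simp only [smul_add]
    abel
  map_smul' c w := by
    simp only [Prod.smul_fst, Prod.smul_snd, smul_eq_mul, map_smul,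
      RingHom.id_apply, Prod.smul_mk]
    refine Prod.ext (by simp; ring) (Prod.ext ?_ (by simp; ring))
    simp only [smul_smul, smul_sub, LinearMap.map_smul]
    rw [mul_comm]
    module

/-- The Lie algebra `so(n)` of skew-symmetric endomorphisms of Euclidean `ℝⁿ`. -/
def soE (n : ℕ) : Set (Module.End ℝ (Fin n → ℝ)) := soSet (dotE n)

/-- The subalgebra `co(1,n+1)_{ℝp}` of `co(1,n+1)` preserving the isotropic line `ℝp`,
whose elements are written `(b, a, A, X)`. -/
def coRp (n : ℕ) : Set (Module.End ℝ (Mink n)) :=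
  {F | ∃ b a : ℝ, ∃ A ∈ soE n, ∃ X : Fin n → ℝ, F = coElem b a A X}

/-- The orthogonal complement of a subspace of Euclidean `ℝⁿ`. -/
def OC (n : ℕ) (W : Submodule ℝ (Fin n → ℝ)) : Submodule ℝ (Fin n → ℝ) where
  carrier := {y | ∀ x ∈ W, dotE n y x = 0}
  zero_mem' := fun x _ => by simp
  add_mem' := by
    intro a b ha hb x hx
    rw [map_add, LinearMap.add_apply, ha x hx, hb x hx, add_zero]
  smul_mem' := by
    intro c y hy x hx
    rw [map_smul, LinearMap.smul_apply, hy x hx, smul_zero]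

/-- The subspace `ℝ^{n₀} = {v : A v = 0 for all A ∈ 𝔥}` on which `𝔥` acts
trivially. -/
def N0 {n : ℕ} (h : Set (Module.End ℝ (Fin n → ℝ))) : Submodule ℝ (Fin n → ℝ) where
  carrier := {v | ∀ A ∈ h, A v = 0}
  zero_mem' := fun A _ => map_zero A
  add_mem' := by
    intro a b ha hb A hA
    rw [map_add, ha A hA, hb A hA, add_zero]
  smul_mem' := by
    intro c v hv A hA
    rw [map_smul, hv A hA, smul_zero]

theorem dot_apply {n : ℕ} (x y : Fin n → ℝ) : dotE n x y = ∑ i, x i * y i := rfl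

theorem dot_comm {n : ℕ} (x y : Fin n → ℝ) : dotE n x y = dotE n y x := by
  rw [dot_apply, dot_apply]
  exact Finset.sum_congr rfl fun i _ => mul_comm _ _

theorem dot_self {n : ℕ} {x : Fin n → ℝ} (hx : dotE n x x = 0) : x = 0 := by
  rw [dot_apply, Finset.sum_eq_zero_iff_of_nonneg (fun i _ => mul_self_nonneg _)] at hx
  funext i
  exact mul_self_eq_zero.1 (hx i (Finset.mem_univ i))

theorem prolong_zero {n : ℕ} (S : (Fin n → ℝ) → Module.End ℝ (Fin n → ℝ))
    (hS : ∀ x, S x ∈ soE n) (hsym : ∀ x y, S x y = S y x) (x y : Fin n → ℝ) : S x y = 0 := by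
  have key : ∀ x y z, dotE n (S x y) z = - dotE n (S x z) y := by
    intro x y z
    have := hS x y z
    rw [dot_comm y] at this
    linarith
  apply dot_self
  set z := S x y with hz
  have h1 : dotE n (S x y) z = - dotE n (S y z) x := by rw [hsym x y]; exact key _ _ _
  have h2 : dotE n (S z y) x = - dotE n (S z x) y := key _ _ _
  have h3 := key x z y
  rw [hsym y z] at h1
  rw [hsym z x] at h2
  rw [← hz] at h1 h3
  linarith

theorem riesz {n : ℕ} (W : Submodule ℝ (Fin n → ℝ)) (θ : (Fin n → ℝ) →ₗ[ℝ] ℝ) :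
    ∃ t ∈ W, ∀ x ∈ W, θ x = dotE n t x := by
  have hnd : ((dotE n).restrict W).Nondegenerate := by
    constructor
    · intro x hx
      exact Subtype.ext (dot_self (hx x))
    · intro x hx
      exact Subtype.ext (dot_self (hx x))
  refine ⟨(((dotE n).restrict W).toDual hnd).symm (θ.comp W.subtype), Subtype.coe_prop _, ?_⟩
  intro x hx
  exact (LinearMap.BilinForm.apply_toDual_symm_apply (B := (dotE n).restrict W) (hB := hnd)
    (θ.comp W.subtype) ⟨x, hx⟩).symm

/-- The weight `b` vanishes on all curvature values when `t ≠ 0`. -/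
theorem curv_b_zero {n : ℕ} (h : Set (Module.End ℝ (Fin n → ℝ))) (hso : h ⊆ soE n)
    (θ₁ : Module.End ℝ (Fin n → ℝ) →ₗ[ℝ] ℝ)
    (t : Fin n → ℝ) (ht : t ∈ N0 h) (ht0 : dotE n t t ≠ 0)
    (R : Mink n →ₗ[ℝ] Mink n →ₗ[ℝ] Module.End ℝ (Mink n))
    (hanti : ∀ x y, R x y = - R y x)
    (hmem : ∀ x y, ∃ A ∈ h, ∃ X, R x y = coElem (θ₁ A + dotE n t X) 0 A X)
    (hbia : ∀ x y z, R x y z + R y z x + R z x y = 0) (x y : Mink n) :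
    (R x y (0, 0, 1)).2.2 = 0 := by
  choose A hA X hR using hmem
  obtain ⟨b, hb⟩ : ∃ b : Mink n → Mink n → ℝ, ∀ x y, b x y = θ₁ (A x y) + dotE n t (X x y) :=
    ⟨_, fun _ _ => rfl⟩
  have hR1 : ∀ x y z, (R x y z).1 = b x y * z.1 + dotE n (X x y) z.2.1 := by
    intro x y z; rw [hR, ← hb]; simp [coElem]
  have hR2 : ∀ x y z, (R x y z).2.1 = b x y • z.2.1 + A x y z.2.1 - z.2.2 • X x y := by
    intro x y z; rw [hR, ← hb]; simp [coElem]
  have hR3 : ∀ x y z, (R x y z).2.2 = b x y * z.2.2 := by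
    intro x y z; rw [hR, ← hb]; simp [coElem]
  have hba : ∀ x y, b x y = - b y x := by
    intro x y
    have h1 := hR3 x y (0, 0, 1)
    rw [hanti] at h1
    have h2 := hR3 y x (0, 0, 1)
    simp at h1 h2
    linarith
  have hXa : ∀ x y, X x y = - X y x := by
    intro x y
    have h1 := hR2 x y (0, 0, 1)
    rw [hanti] at h1
    have h2 := hR2 y x (0, 0, 1)
    simp at h1 h2
    rw [h2] at h1
    simpa using h1.symm
  have hAa : ∀ x y u, A x y u = - A y x u := by
    intro x y u
    have h1 := hR2 x y (0, u, 0)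
    rw [hanti] at h1
    have h2 := hR2 y x (0, u, 0)
    simp at h1 h2
    rw [h2, hba x y] at h1
    have h3 := eq_sub_of_add_eq' h1.symm
    rw [h3]; module
  have B1 : ∀ x y z, (b x y * z.1 + dotE n (X x y) z.2.1) + (b y z * x.1 + dotE n (X y z) x.2.1)
      + (b z x * y.1 + dotE n (X z x) y.2.1) = 0 := by
    intro x y z
    rw [← hR1, ← hR1, ← hR1]
    exact congrArg (fun w : Mink n => w.1) (hbia x y z)
  have B2 : ∀ x y z, (b x y • z.2.1 + A x y z.2.1 - z.2.2 • X x y)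
      + (b y z • x.2.1 + A y z x.2.1 - x.2.2 • X y z)
      + (b z x • y.2.1 + A z x y.2.1 - y.2.2 • X z x) = 0 := by
    intro x y z
    rw [← hR2, ← hR2, ← hR2]
    exact congrArg (fun w : Mink n => w.2.1) (hbia x y z)
  have B3 : ∀ x y z, b x y * z.2.2 + b y z * x.2.2 + b z x * y.2.2 = 0 := by
    intro x y z
    rw [← hR3, ← hR3, ← hR3]
    exact congrArg (fun w : Mink n => w.2.2) (hbia x y z)
  have hskew : ∀ x y u v, dotE n (A x y u) v = - dotE n (A x y v) u := by
    intro x y u v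
    have := hso (hA x y) u v
    rw [dot_comm u] at this
    linarith
  have hAt : ∀ x y, A x y t = 0 := fun x y => ht _ (hA x y)
  -- the weight vanishes on p^⊥
  have b0 : ∀ x y : Mink n, x.2.2 = 0 → y.2.2 = 0 → b x y = 0 := by
    intro x y hx hy
    have := B3 x y (0, 0, 1)
    rw [hx, hy] at this
    simpa using this
  -- A(p, U) = 0
  have ApU : ∀ u v, A (1, 0, 0) (0, u, 0) v = 0 := by
    intro u v
    refine prolong_zero (fun u => A (1, 0, 0) (0, u, 0)) (fun u => hso (hA _ _)) ?_ u v
    intro u v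
    have := B2 (1, 0, 0) (0, u, 0) (0, v, 0)
    simp only [b0 (1, 0, 0) (0, u, 0) rfl rfl, b0 (0, v, 0) (1, 0, 0) rfl rfl,
      hAa (0, v, 0) (1, 0, 0)] at this
    simp at this
    exact sub_eq_zero.1 (by rw [sub_eq_add_neg]; exact this)
  have XpU : ∀ u v, dotE n (X (1, 0, 0) (0, u, 0)) v = dotE n (X (1, 0, 0) (0, v, 0)) u := by
    intro u v
    have := B1 (1, 0, 0) (0, u, 0) (0, v, 0)
    rw [b0 (0, u, 0) (0, v, 0) rfl rfl, hXa (0, v, 0) (1, 0, 0)] at this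
    simp at this
    linarith
  have hZ : ∀ u, b (0, u, 0) (0, 0, 1) = dotE n (X (1, 0, 0) (0, 0, 1)) u := by
    intro u
    have := B1 (1, 0, 0) (0, u, 0) (0, 0, 1)
    rw [hXa (0, 0, 1) (1, 0, 0)] at this
    simp at this
    linarith
  have XpU2 : ∀ u, X (1, 0, 0) (0, u, 0)
      = - (b (1, 0, 0) (0, 0, 1) • u) - A (1, 0, 0) (0, 0, 1) u := by
    intro u
    have := B2 (1, 0, 0) (0, u, 0) (0, 0, 1)
    rw [hAa (0, 0, 1) (1, 0, 0), hba (0, 0, 1) (1, 0, 0)] at this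
    simp at this
    linear_combination - this
  have Apq : ∀ u, A (1, 0, 0) (0, 0, 1) u = 0 := by
    intro u
    apply dot_self
    generalize hv : A (1, 0, 0) (0, 0, 1) u = v
    have h1 := XpU u v
    rw [XpU2, XpU2] at h1
    have h2 := hskew (1, 0, 0) (0, 0, 1) u v
    simp only [map_sub, map_neg, map_smul, LinearMap.sub_apply, LinearMap.neg_apply,
      LinearMap.smul_apply, smul_eq_mul, dot_comm v u] at h1
    rw [hv] at h1 h2
    linarith
  have bp : b (1, 0, 0) (0, 0, 1) = 0 := by
    have h1 := hb (1, 0, 0) (0, t, 0)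
    have hz : A (1, 0, 0) (0, t, 0) = 0 := LinearMap.ext (ApU t)
    rw [b0 _ _ rfl rfl, hz, XpU2, Apq] at h1
    simp at h1
    exact h1.resolve_right ht0
  have tZ : dotE n t (X (1, 0, 0) (0, 0, 1)) = 0 := by
    have h1 := hb (1, 0, 0) (0, 0, 1)
    have hz : A (1, 0, 0) (0, 0, 1) = 0 := LinearMap.ext Apq
    rw [bp, hz] at h1
    simpa using h1.symm
  have bt : b (0, t, 0) (0, 0, 1) = 0 := by rw [hZ, dot_comm, tZ]
  have AtV : ∀ u v, A (0, t, 0) (0, u, 0) v = 0 := by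
    intro u v
    refine prolong_zero (fun u => A (0, t, 0) (0, u, 0)) (fun u => hso (hA _ _)) ?_ u v
    intro u v
    have := B2 (0, t, 0) (0, u, 0) (0, v, 0)
    simp only [b0 (0, t, 0) (0, u, 0) rfl rfl, b0 (0, v, 0) (0, t, 0) rfl rfl,
      b0 (0, u, 0) (0, v, 0) rfl rfl, hAt,
      hAa (0, v, 0) (0, t, 0)] at this
    simp at this
    exact sub_eq_zero.1 (by rw [sub_eq_add_neg]; exact this)
  have bU : ∀ v, b (0, v, 0) (0, 0, 1) = 0 := by
    intro v
    have h1 := hb (0, t, 0) (0, v, 0)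
    have hz : A (0, t, 0) (0, v, 0) = 0 := LinearMap.ext (AtV v)
    rw [b0 _ _ rfl rfl, hz] at h1
    have h2 := congrArg (dotE n t) (B2 (0, t, 0) (0, v, 0) (0, 0, 1))
    have h3 := hskew (0, 0, 1) (0, t, 0) v t
    rw [hAt] at h3
    rw [hAt, hba (0, 0, 1) (0, t, 0), bt] at h2
    simp at h1 h2 h3
    rw [dot_comm t (A _ _ _), h3, ← h1] at h2
    simp at h2
    exact h2.resolve_right ht0
  have bq : ∀ x, b x (0, 0, 1) = 0 := by
    intro x
    have hx : x = x.1 • ((1, 0, 0) : Mink n) + (0, x.2.1, 0) + x.2.2 • ((0, 0, 1) : Mink n) := by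
      ext <;> simp
    have e : ∀ x, b x (0, 0, 1) = (R x (0, 0, 1) (0, 0, 1)).2.2 := by
      intro x; rw [hR3]; simp
    have hq : b (0, 0, 1) (0, 0, 1) = 0 := by
      have := hba (0, 0, 1) (0, 0, 1)
      linarith
    rw [e, hx]
    simp only [map_add, map_smul, LinearMap.add_apply, LinearMap.smul_apply, Prod.snd_add,
      Prod.smul_snd, ← e, bp, bU, hq]
    simp
  have hfin := B3 x y (0, 0, 1)
  rw [bq, hba (0, 0, 1) x, bq] at hfin
  rw [hR3]
  simpa using hfin

/-- If the algebra
`𝔤 = {(θ₁(A) + θ₂(X), 0, A, X + Y) : A ∈ 𝔥, X ∈ ℝ^{n₀}, Y ∈ (ℝ^{n₀})^⊥}`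
is a Berger algebra, then `θ₂ = 0`. -/
theorem Berger_implies_theta2_zero (n : ℕ)
    (h : Set (Module.End ℝ (Fin n → ℝ)))
    (hsub : IsLieSub h) (hso : h ⊆ soE n)
    (θ₁ : Module.End ℝ (Fin n → ℝ) →ₗ[ℝ] ℝ) (θ₂ : (Fin n → ℝ) →ₗ[ℝ] ℝ)
    (hθ₁ : ∀ A ∈ h, ∀ B ∈ h, θ₁ (A * B - B * A) = 0)
    (hB : IsBerger {F | ∃ A ∈ h, ∃ X ∈ N0 h, ∃ Y ∈ OC n (N0 h),
      F = coElem (θ₁ A + θ₂ X) 0 A (X + Y)}) :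
    ∀ X ∈ N0 h, θ₂ X = 0 := by
  obtain ⟨t, ht, hθ⟩ := riesz (N0 h) θ₂
  by_cases ht0 : dotE n t t = 0
  · intro X hX
    rw [hθ X hX, dot_self ht0]
    simp
  intro X hX
  have hF : coElem (θ₁ 0 + θ₂ X) 0 0 (X + 0) ∈ {F | ∃ A ∈ h, ∃ X ∈ N0 h, ∃ Y ∈ OC n (N0 h),
      F = coElem (θ₁ A + θ₂ X) 0 A (X + Y)} :=
    ⟨0, hsub.1, X, hX, 0, Submodule.zero_mem _, rfl⟩
  rw [← hB] at hF
  have hle : ∀ F ∈ curvSpan {F | ∃ A ∈ h, ∃ X ∈ N0 h, ∃ Y ∈ OC n (N0 h),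
      F = coElem (θ₁ A + θ₂ X) 0 A (X + Y)}, (F (0, 0, 1)).2.2 = 0 := by
    intro F hF
    induction hF using Submodule.span_induction with
    | mem F hF =>
      obtain ⟨R, ⟨hanti, hmem, hbia⟩, x, y, rfl⟩ := hF
      refine curv_b_zero h hso θ₁ t ht ht0 R hanti ?_ hbia x y
      intro x y
      obtain ⟨A, hA, X, hX, Y, hY, e⟩ := hmem x y
      refine ⟨A, hA, X + Y, ?_⟩
      rw [e, hθ X hX, map_add, dot_comm t Y, hY t ht, add_zero]
    | zero => rfl
    | add F G _ _ hF hG => simp [hF, hG]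
    | smul c F _ hF => simp [hF]
  have := hle _ hF
  simpa [coElem] using this

end Weyl
end
end

section
/- A subalgebra 𝔤 ⊆ so(1,n+1)_{ℝp} is weakly irreducible if and only if 𝔤 is one of the following: (type 1) 𝔤^{1,𝔥} = {(a,A,X) : a ∈ ℝ, A ∈ 𝔥, X ∈ ℝⁿ} for a subalgebra 𝔥 ⊆ so(n); (type 2) 𝔤^{2,𝔥} = {(0,A,X) : A ∈ 𝔥, X ∈ ℝⁿ} for a subalgebra 𝔥 ⊆ so(n); (type 3) 𝔤^{3,𝔥,φ} = {(φ(A),A,X) : A ∈ 𝔥, X ∈ ℝⁿ} for a subalgebra 𝔥 ⊆ so(n) with z(𝔥) ≠ 0 and a nonzero linear map φ : 𝔥 → ℝ with φ|_{[𝔥,𝔥]} = 0; (type 4) 𝔤^{4,𝔥,m,ψ} = {(0, A, X + ψ(A)) : A ∈ 𝔥, X ∈ ℝᵐ} for a fixed orthogonal decomposition ℝⁿ = ℝᵐ ⊕ ℝ^{n−m}, a subalgebra 𝔥 ⊆ so(m) with dim z(𝔥) ≥ n−m, and a surjective linear map ψ : 𝔥 → ℝ^{n−m} with ψ|_{[𝔥,𝔥]}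 = 0. -/
open Module

noncomputable section

namespace Weyl

variable {V : Type*} [AddCommGroup V] [Module ℝ V]

/-- The subalgebra `so(1,n+1)_{ℝp}` of `so(1,n+1)` preserving the isotropic
line `ℝp`, with elements written `(a, A, X)`. -/
def soRp (n : ℕ) : Set (Module.End ℝ (Mink n)) :=
  {F | ∃ a : ℝ, ∃ A ∈ soE n, ∃ X : Fin n → ℝ, F = coElem 0 a A X}


lemma exists_frame {U : Type*} [AddCommGroup U] [Module ℝ U] [FiniteDimensional ℝ U]
    (B : LinearMap.BilinForm ℝ U) (hs : ∀ x y, B x y = B y x)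
    (hp : ∀ x, x ≠ 0 → 0 < B x x) (S : Submodule ℝ U) :
    ∃ (m : ℕ) (b : Fin m → U), (∀ i, b i ∈ S) ∧ ∀ x ∈ S, x = ∑ i, B (b i) x • b i := by
  let core : InnerProductSpace.Core ℝ U :=
    { inner := fun x y => B x y
      conj_inner_symm := fun x y => by simp [hs x y]
      re_inner_nonneg := fun x => by
        by_cases h : x = 0
        · simp [h]
        · exact (hp x h).le
      add_left := fun x y z => by simp
      smul_left := fun x y r => by simp
      definite := fun x h => by
        by_contra h0
        exact (hp x h0).ne' h }
  let _ : NormedAddCommGroup U := core.toNormedAddCommGroup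
  let _ : InnerProductSpace ℝ U := InnerProductSpace.ofCore core.toCore
  let b := stdOrthonormalBasis ℝ S
  refine ⟨_, fun i => (b i : U), fun i => (b i).2, fun x hx => ?_⟩
  have h2 := congrArg (Subtype.val) (b.sum_repr' ⟨x, hx⟩)
  simp only [Submodule.coe_sum, Submodule.coe_smul] at h2
  exact h2.symm

/-- orthogonal projection as a linear map -/
lemma exists_proj {U : Type*} [AddCommGroup U] [Module ℝ U] [FiniteDimensional ℝ U]
    (B : LinearMap.BilinForm ℝ U) (hs : ∀ x y, B x y = B y x)
    (hp : ∀ x, x ≠ 0 → 0 < B x x) (S : Submodule ℝ U) :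
    ∃ P : U →ₗ[ℝ] U, (∀ x, x - P x ∈ S) ∧ ∀ x, ∀ y ∈ S, B (P x) y = 0 := by
  obtain ⟨m, b, hb, hx⟩ := exists_frame B hs hp S
  refine ⟨LinearMap.id - ∑ i, (B (b i)).smulRight (b i), fun x => ?_, fun x y hy => ?_⟩
  · simp only [LinearMap.sub_apply, LinearMap.id_apply, LinearMap.sum_apply,
      LinearMap.smulRight_apply, sub_sub_cancel]
    exact S.sum_mem fun i _ => S.smul_mem _ (hb i)
  · simp only [LinearMap.sub_apply, LinearMap.id_apply, LinearMap.sum_apply,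
      LinearMap.smulRight_apply, map_sub, map_sum, map_smul, LinearMap.smul_apply, smul_eq_mul]
    have : B x y = ∑ i, B (b i) x * B (b i) y := by
      conv_lhs => rw [hx y hy]
      simp only [map_sum, map_smul, smul_eq_mul]
      exact Finset.sum_congr rfl fun i _ => by rw [hs x, mul_comm]
    rw [this, sub_self]

lemma exists_factor {U P M : Type*} [AddCommGroup U] [Module ℝ U] [AddCommGroup P] [Module ℝ P]
    [AddCommGroup M] [Module ℝ M] (G : Submodule ℝ U) (f : U →ₗ[ℝ] P) (t : U →ₗ[ℝ] M)
    (h : ∀ u ∈ G, f u = 0 → t u = 0) : ∃ c : P →ₗ[ℝ] M, ∀ u ∈ G, c (f u) = t u := by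
  let f' := f.domRestrict G
  obtain ⟨s, hs⟩ := f'.rangeRestrict.exists_rightInverse_of_surjective (LinearMap.range_rangeRestrict f')
  obtain ⟨c, hc⟩ := LinearMap.exists_extend ((t.domRestrict G).comp s)
  refine ⟨c, fun u hu => ?_⟩
  have h1 : f u = (f'.rangeRestrict ⟨u, hu⟩ : P) := rfl
  have h2 := LinearMap.congr_fun hc (f'.rangeRestrict ⟨u, hu⟩)
  simp only [LinearMap.comp_apply, Submodule.subtype_apply] at h2
  rw [h1, h2]
  have h3 := LinearMap.congr_fun hs (f'.rangeRestrict ⟨u, hu⟩)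
  have h4 : f (s (f'.rangeRestrict ⟨u, hu⟩)).1 = f u := congrArg Subtype.val h3
  have h5 := h ((s (f'.rangeRestrict ⟨u, hu⟩)).1 - u) (G.sub_mem (Subtype.property _) hu)
    (by rw [map_sub, h4, sub_self])
  rw [map_sub, sub_eq_zero] at h5
  exact h5

/-- skew operators annihilate the canonical tensor of a frame -/
lemma frame_skew {U M : Type*} [AddCommGroup U] [Module ℝ U] [AddCommGroup M] [Module ℝ M]
    (B : LinearMap.BilinForm ℝ U) (hs : ∀ x y, B x y = B y x) {m : ℕ} (b : Fin m → U)
    (S : Submodule ℝ U) (hb : ∀ i, b i ∈ S) (hx : ∀ x ∈ S, x = ∑ i, B (b i) x • b i)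
    (D : U →ₗ[ℝ] U) (hD : ∀ x ∈ S, D x ∈ S) (hsk : ∀ x y, B (D x) y = - B x (D y))
    (β : U →ₗ[ℝ] U →ₗ[ℝ] M) : ∑ i, (β (b i) (D (b i)) + β (D (b i)) (b i)) = 0 := by
  have e1 : ∀ i, β (b i) (D (b i)) = ∑ j, B (b j) (D (b i)) • β (b i) (b j) := fun i => by
    conv_lhs => rw [hx (D (b i)) (hD _ (hb i))]
    simp
  have e2 : ∀ i, β (D (b i)) (b i) = ∑ j, B (b j) (D (b i)) • β (b j) (b i) := fun i => by
    conv_lhs => rw [hx (D (b i)) (hD _ (hb i))]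
    simp
  simp only [e1, e2, Finset.sum_add_distrib]
  rw [Finset.sum_comm, ← Finset.sum_add_distrib]
  refine Finset.sum_eq_zero fun i _ => ?_
  rw [← Finset.sum_add_distrib]
  refine Finset.sum_eq_zero fun j _ => ?_
  rw [hs (b i), hsk, ← add_smul, neg_add_cancel, zero_smul]

lemma dotE_apply (n : ℕ) (x y : Fin n → ℝ) : dotE n x y = ∑ i, x i * y i := rfl

lemma dotE_symm (n : ℕ) (x y : Fin n → ℝ) : dotE n x y = dotE n y x := by
  simp only [dotE_apply, mul_comm]

lemma dotE_pos (n : ℕ) (x : Fin n → ℝ) (h : x ≠ 0) : 0 < dotE n x x := by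
  obtain ⟨i, hi⟩ := Function.ne_iff.mp h
  exact Finset.sum_pos' (fun i _ => mul_self_nonneg _)
    ⟨i, Finset.mem_univ _, mul_self_pos.mpr hi⟩

lemma dotE_eq_zero (n : ℕ) (x : Fin n → ℝ) (h : dotE n x x = 0) : x = 0 := by
  by_contra h0
  exact (dotE_pos n x h0).ne' h

lemma dotE_nonneg (n : ℕ) (x : Fin n → ℝ) : 0 ≤ dotE n x x := by
  rw [dotE_apply]
  exact Finset.sum_nonneg fun i _ => mul_self_nonneg _

lemma soE_skew {n : ℕ} {A : Module.End ℝ (Fin n → ℝ)} (hA : A ∈ soE n) (x y : Fin n → ℝ) :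
    dotE n (A x) y = - dotE n x (A y) := eq_neg_of_add_eq_zero_left (hA x y)

/-- the invariant form on `End`. -/
def trE (n : ℕ) : LinearMap.BilinForm ℝ (Module.End ℝ (Fin n → ℝ)) :=
  LinearMap.mk₂ ℝ (fun A B => ((LinearMap.toMatrix' A).transpose * LinearMap.toMatrix' B).trace)
    (fun x x' y => by simp [add_mul])
    (fun c x y => by simp)
    (fun x y y' => by simp [mul_add])
    (fun c x y => by simp)

lemma trE_apply (n : ℕ) (A B : Module.End ℝ (Fin n → ℝ)) :
    trE n A B = ((LinearMap.toMatrix' A).transpose * LinearMap.toMatrix' B).trace := rfl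

lemma trE_symm (n : ℕ) (A B : Module.End ℝ (Fin n → ℝ)) : trE n A B = trE n B A := by
  rw [trE_apply, trE_apply, ← Matrix.trace_transpose, Matrix.transpose_mul,
    Matrix.transpose_transpose]

lemma trE_pos (n : ℕ) (A : Module.End ℝ (Fin n → ℝ)) (h : A ≠ 0) : 0 < trE n A A := by
  have h1 : LinearMap.toMatrix' A ≠ 0 := by simpa using h
  rw [trE_apply]
  have h2 : ∃ j i, LinearMap.toMatrix' A i j ≠ 0 := by
    by_contra! hc
    exact h1 (Matrix.ext fun i j => hc j i)
  obtain ⟨j, i, hij⟩ := h2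
  simp only [Matrix.trace, Matrix.diag, Matrix.mul_apply, Matrix.transpose_apply]
  refine Finset.sum_pos' (fun j _ => Finset.sum_nonneg fun i _ => mul_self_nonneg _)
    ⟨j, Finset.mem_univ _, Finset.sum_pos' (fun i _ => mul_self_nonneg _)
    ⟨i, Finset.mem_univ _, mul_self_pos.mpr hij⟩⟩

lemma soE_transpose {n : ℕ} {C : Module.End ℝ (Fin n → ℝ)} (hC : C ∈ soE n) :
    (LinearMap.toMatrix' C).transpose = - LinearMap.toMatrix' C := by
  ext i j
  have h := hC (Pi.single i 1) (Pi.single j 1)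
  simp only [dotE_apply, Pi.single_apply, mul_ite, ite_mul, mul_one, one_mul, mul_zero, zero_mul,
    Finset.sum_ite_eq', Finset.mem_univ, if_true] at h
  have e : ∀ i j, LinearMap.toMatrix' C i j = C (Pi.single j 1) i := fun i j => by
    rw [← Matrix.toLin'_toMatrix' C, Matrix.toLin'_apply, Matrix.mulVec_single_one]
    simp
  rw [Matrix.transpose_apply, Matrix.neg_apply, e, e]
  linarith

lemma trE_skew {n : ℕ} {C : Module.End ℝ (Fin n → ℝ)} (hC : C ∈ soE n)
    (A B : Module.End ℝ (Fin n → ℝ)) :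
    trE n (C * A - A * C) B = - trE n A (C * B - B * C) := by
  rw [trE_apply, trE_apply]
  simp only [map_sub, LinearMap.toMatrix'_mul, Matrix.transpose_sub,
    Matrix.transpose_mul, soE_transpose hC, Matrix.sub_mul, Matrix.mul_sub, Matrix.trace_sub,
    Matrix.neg_mul, Matrix.mul_neg, Matrix.trace_neg]
  rw [Matrix.mul_assoc (LinearMap.toMatrix' C), Matrix.trace_mul_comm (LinearMap.toMatrix' C)]
  simp only [Matrix.mul_assoc]
  ring

/-- reductivity -/
lemma center_of_vanish {n : ℕ} {M : Type*} [AddCommGroup M] [Module ℝ M]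
    {h : Set (Module.End ℝ (Fin n → ℝ))} (hl : IsLieSub h) (hs : h ⊆ soE n)
    (ψ : Module.End ℝ (Fin n → ℝ) →ₗ[ℝ] M) (hψ : ∀ A ∈ h, ∀ B ∈ h, ψ (A * B - B * A) = 0)
    {A : Module.End ℝ (Fin n → ℝ)} (hA : A ∈ h) :
    ∃ Z ∈ h, (∀ B ∈ h, Z * B = B * Z) ∧ ψ Z = ψ A := by
  obtain ⟨h0, hadd, hsm, hbr⟩ := hl
  let H : Submodule ℝ (Module.End ℝ (Fin n → ℝ)) :=
    { carrier := h, zero_mem' := h0, add_mem' := fun {a b} ha hb => hadd a ha b hb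
      smul_mem' := fun c x hx => hsm c x hx }
  let S := Submodule.span ℝ {F | ∃ A ∈ h, ∃ B ∈ h, F = A * B - B * A}
  have hSH : S ≤ H := by
    refine Submodule.span_le.2 ?_
    rintro _ ⟨A, hA, B, hB, rfl⟩
    exact hbr A hA B hB
  have hSψ : S ≤ LinearMap.ker ψ := by
    refine Submodule.span_le.2 ?_
    rintro _ ⟨A, hA, B, hB, rfl⟩
    exact hψ A hA B hB
  obtain ⟨P, hP1, hP2⟩ := exists_proj (trE n) (trE_symm n) (trE_pos n) S
  have hPA : P A ∈ H := by
    have := H.sub_mem (show A ∈ H from hA) (hSH (hP1 A))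
    simpa using this
  refine ⟨P A, hPA, fun B hB => ?_, ?_⟩
  · have hz : P A * B - B * P A ∈ h := hbr _ hPA _ hB
    by_contra hne
    have h1 : B * P A - P A * B ≠ 0 := fun h => hne (sub_eq_zero.1 h).symm
    have h2 := trE_pos n _ h1
    rw [trE_skew (hs hB), hP2, neg_zero] at h2
    · exact lt_irrefl _ h2
    · refine Submodule.subset_span ⟨B, hB, _, ?_, rfl⟩
      rw [← neg_sub]
      exact H.neg_mem hz
  · have := hSψ (hP1 A)
    rw [LinearMap.mem_ker, map_sub, sub_eq_zero] at this
    exact this.symm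

lemma coElem_apply {n : ℕ} (a : ℝ) (A : Module.End ℝ (Fin n → ℝ)) (X : Fin n → ℝ) (w : Mink n) :
    coElem 0 a A X w = (a * w.1 + dotE n X w.2.1, A w.2.1 - w.2.2 • X, - a * w.2.2) := by
  simp [coElem]

lemma coElem_comb {n : ℕ} (s a b : ℝ) (A B : Module.End ℝ (Fin n → ℝ)) (X Y : Fin n → ℝ) :
    coElem 0 a A X + s • coElem 0 b B Y = coElem 0 (a + s * b) (A + s • B) (X + s • Y) := by
  refine LinearMap.ext fun w => ?_
  simp only [LinearMap.add_apply, LinearMap.smul_apply, coElem_apply]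
  refine Prod.ext ?_ (Prod.ext ?_ ?_)
  · simp; ring
  · simp; module
  · simp; ring

lemma coElem_bracket {n : ℕ} (a b : ℝ) {A B : Module.End ℝ (Fin n → ℝ)}
    (hA : A ∈ soE n) (hB : B ∈ soE n) (X Y : Fin n → ℝ) :
    coElem 0 a A X * coElem 0 b B Y - coElem 0 b B Y * coElem 0 a A X =
      coElem 0 0 (A * B - B * A) (a • Y + A Y - (b • X + B X)) := by
  refine LinearMap.ext fun w => ?_
  simp only [LinearMap.sub_apply, Module.End.mul_apply, coElem_apply]
  refine Prod.ext ?_ (Prod.ext ?_ ?_)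
  · have h1 := soE_skew hA Y w.2.1
    have h2 := soE_skew hB X w.2.1
    have h3 := dotE_symm n X Y
    simp [h1, h2, h3]; ring
  · simp; module
  · simp; ring

/-- components of an endomorphism of Minkowski space -/
def aOf (n : ℕ) : Module.End ℝ (Mink n) →ₗ[ℝ] ℝ where
  toFun F := (F (pvec n)).1
  map_add' _ _ := rfl
  map_smul' _ _ := rfl

def AOf (n : ℕ) : Module.End ℝ (Mink n) →ₗ[ℝ] Module.End ℝ (Fin n → ℝ) where
  toFun F := LinearMap.fst ℝ _ _ ∘ₗ LinearMap.snd ℝ _ _ ∘ₗ F ∘ₗ LinearMap.inr ℝ _ _ ∘ₗ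
    LinearMap.inl ℝ _ _
  map_add' _ _ := rfl
  map_smul' _ _ := rfl

def XOf (n : ℕ) : Module.End ℝ (Mink n) →ₗ[ℝ] (Fin n → ℝ) where
  toFun F := -(F (qvec n)).2.1
  map_add' _ _ := by simp; abel
  map_smul' _ _ := by simp

lemma aOf_coElem {n : ℕ} (a : ℝ) (A : Module.End ℝ (Fin n → ℝ)) (X : Fin n → ℝ) :
    aOf n (coElem 0 a A X) = a := by
  simp [aOf, coElem_apply, pvec]

lemma AOf_coElem {n : ℕ} (a : ℝ) (A : Module.End ℝ (Fin n → ℝ)) (X : Fin n → ℝ) :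
    AOf n (coElem 0 a A X) = A := by
  refine LinearMap.ext fun x => ?_
  change (coElem 0 a A X (0, x, 0)).2.1 = A x
  simp [coElem_apply]

lemma XOf_coElem {n : ℕ} (a : ℝ) (A : Module.End ℝ (Fin n → ℝ)) (X : Fin n → ℝ) :
    XOf n (coElem 0 a A X) = X := by
  simp [XOf, coElem_apply, qvec]

lemma minkB_apply (n : ℕ) (X Y : Mink n) :
    minkB n X Y = X.1 * Y.2.2 + X.2.2 * Y.1 + dotE n X.2.1 Y.2.1 := rfl

lemma wi_bot {n : ℕ} {g : Set (Module.End ℝ (Mink n))} (hg : g ⊆ soRp n)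
    (hw : WeaklyIrred (minkB n) g) (U : Submodule ℝ (Fin n → ℝ)) (x0 : Fin n → ℝ)
    (hU : ∀ a A X, A ∈ soE n → coElem 0 a A X ∈ g → ∀ y ∈ U,
      A y ∈ U ∧ dotE n X y = a * dotE n x0 y - dotE n x0 (A y)) : U = ⊥ := by
  let L : (Fin n → ℝ) →ₗ[ℝ] Mink n := (-(dotE n x0)).prod (LinearMap.inl ℝ _ _)
  have hL : ∀ y, L y = (- dotE n x0 y, y, 0) := fun y => rfl
  have hi : Invariant g (U.map L) := by
    rintro F hF _ ⟨y, hy, rfl⟩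
    obtain ⟨a, A, hA, X, rfl⟩ := hg hF
    obtain ⟨h1, h2⟩ := hU a A X hA hF y hy
    refine ⟨A y, h1, ?_⟩
    rw [hL, hL, coElem_apply]
    refine Prod.ext ?_ (Prod.ext ?_ ?_)
    · simp [h2]; ring
    · simp
    · simp
  have hd : IsNondegOn (minkB n) (U.map L) := by
    rintro _ ⟨y, hy, rfl⟩ h
    have := h (L y) (Submodule.mem_map_of_mem hy)
    simp only [hL, minkB_apply, mul_zero, zero_mul, zero_add] at this
    rw [dotE_eq_zero n y this, map_zero]
  rcases hw (U.map L) hi hd with h | h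
  · rw [Submodule.eq_bot_iff] at h ⊢
    intro y hy
    have := h (L y) (Submodule.mem_map_of_mem hy)
    rw [hL] at this
    exact congrArg (fun w : Mink n => w.2.1) this
  · exfalso
    have : qvec n ∈ U.map L := h ▸ Submodule.mem_top
    obtain ⟨y, -, hy⟩ := this
    have := congrArg (fun w : Mink n => w.2.2) hy
    simp [hL, qvec] at this

/-- the pair algebra -/
abbrev PA (n : ℕ) := ℝ × Module.End ℝ (Fin n → ℝ)

def formP (n : ℕ) : LinearMap.BilinForm ℝ (PA n) :=
  LinearMap.mk₂ ℝ (fun x y => x.1 * y.1 + trE n x.2 y.2)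
    (fun x x' y => by simp; ring)
    (fun c x y => by simp; ring)
    (fun x y y' => by simp; ring)
    (fun c x y => by simp; ring)

lemma formP_apply (n : ℕ) (x y : PA n) : formP n x y = x.1 * y.1 + trE n x.2 y.2 := rfl

lemma formP_symm (n : ℕ) (x y : PA n) : formP n x y = formP n y x := by
  rw [formP_apply, formP_apply, trE_symm, mul_comm]

lemma formP_pos (n : ℕ) (x : PA n) (h : x ≠ 0) : 0 < formP n x x := by
  rw [formP_apply]
  by_cases h2 : x.2 = 0
  · have h1 : x.1 ≠ 0 := fun h1 => h (Prod.ext h1 h2)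
    simpa [h2] using h1
  · have := trE_pos n x.2 h2
    have := mul_self_nonneg x.1
    linarith

def brP {n : ℕ} (k : PA n) : PA n →ₗ[ℝ] PA n where
  toFun x := (0, k.2 * x.2 - x.2 * k.2)
  map_add' x y := by
    refine Prod.ext (by simp) ?_
    simp [mul_add, add_mul]; abel
  map_smul' c x := by
    refine Prod.ext (by simp) ?_
    simp [smul_sub]

lemma brP_apply {n : ℕ} (k x : PA n) : brP k x = (0, k.2 * x.2 - x.2 * k.2) := rfl

lemma brP_skew {n : ℕ} (k x y : PA n) (hk : k.2 ∈ soE n) :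
    formP n (brP k x) y = - formP n x (brP k y) := by
  simp only [formP_apply, brP_apply, trE_skew hk]
  ring

/-- The action. -/
def actP {n : ℕ} (x0 : Fin n → ℝ) : PA n →ₗ[ℝ] (Fin n → ℝ) where
  toFun x := x.1 • x0 + x.2 x0
  map_add' x y := by simp; module
  map_smul' c x := by simp; module

lemma actP_apply {n : ℕ} (x0 : Fin n → ℝ) (x : PA n) : actP x0 x = x.1 • x0 + x.2 x0 := rfl

lemma actP_cocycle {n : ℕ} (x0 : Fin n → ℝ) (k x : PA n) :
    actP x0 (brP k x) = k.1 • actP x0 x + k.2 (actP x0 x) -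
      (x.1 • actP x0 k + x.2 (actP x0 k)) := by
  simp [actP_apply, brP_apply]; module

lemma cocycle_one {n : ℕ} (K : Submodule ℝ (PA n)) (hK : ∀ k ∈ K, k.2 ∈ soE n)
    (hbr : ∀ k ∈ K, ∀ x ∈ K, brP k x ∈ K) (c : PA n →ₗ[ℝ] (Fin n → ℝ))
    (hc : ∀ k ∈ K, ∀ x ∈ K, c (brP k x) = k.1 • c x + k.2 (c x) - (x.1 • c k + x.2 (c k)))
    (k0 : PA n) (hk0 : k0 ∈ K) (h0 : k0.1 ≠ 0) :
    ∃ x0 : Fin n → ℝ, ∀ k ∈ K, c k = actP x0 k := by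
  let T : Module.End ℝ (Fin n → ℝ) := k0.1 • 1 + k0.2
  have hdot : ∀ x, dotE n x (T x) = k0.1 * dotE n x x := fun x => by
    have h1 := soE_skew (hK _ hk0) x x
    have h2 := dotE_symm n (k0.2 x) x
    simp only [T, LinearMap.add_apply, LinearMap.smul_apply, Module.End.one_apply, map_add,
      map_smul, smul_eq_mul]
    linarith
  have hinj : Function.Injective T := by
    rw [injective_iff_map_eq_zero]
    intro x hx
    have := hdot x
    rw [hx, map_zero] at this
    exact dotE_eq_zero n x ((mul_eq_zero.1 this.symm).resolve_left h0)
  obtain ⟨x0, hx0⟩ := (LinearMap.injective_iff_surjective.1 hinj) (c k0)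
  have hx0' : actP x0 k0 = c k0 := by rw [← hx0]; rfl
  refine ⟨x0, ?_⟩
  let c' := c - actP x0
  have hc' : ∀ x ∈ K, c' (brP k0 x) = T (c' x) := fun x hx => by
    simp only [c', LinearMap.sub_apply]
    rw [hc _ hk0 _ hx, actP_cocycle, hx0']
    simp only [T, LinearMap.add_apply, LinearMap.smul_apply, Module.End.one_apply, map_sub]
    module
  obtain ⟨m, b, hb, hx⟩ := exists_frame (formP n) (formP_symm n) (formP_pos n) K
  have key := frame_skew (formP n) (formP_symm n) b K hb hx (brP k0) (hbr k0 hk0)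
    (fun x y => brP_skew k0 x y (hK _ hk0)) ((dotE n).compl₁₂ c' c')
  simp only [LinearMap.compl₁₂_apply] at key
  have key2 : ∑ i, dotE n (c' (b i)) (c' (b i)) = 0 := by
    have h2 : ∑ i, (k0.1 * 2) * dotE n (c' (b i)) (c' (b i)) = 0 := by
      rw [← key]
      refine Finset.sum_congr rfl fun i _ => ?_
      rw [dotE_symm n (c' (brP k0 (b i))), hc' _ (hb i), hdot]
      ring
    rw [← Finset.mul_sum] at h2
    exact (mul_eq_zero.1 h2).resolve_left (mul_ne_zero h0 two_ne_zero)
  rw [Finset.sum_eq_zero_iff_of_nonneg (fun i _ => dotE_nonneg n _)] at key2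
  intro k hk
  have : c' k = 0 := by
    rw [hx k hk, map_sum]
    refine Finset.sum_eq_zero fun i _ => ?_
    rw [map_smul, dotE_eq_zero n _ (key2 i (Finset.mem_univ _)), smul_zero]
  exact sub_eq_zero.1 this

lemma cocycle_two {n : ℕ} (K : Submodule ℝ (PA n)) (hK : ∀ k ∈ K, k.2 ∈ soE n)
    (hbr : ∀ k ∈ K, ∀ x ∈ K, brP k x ∈ K) (c : PA n →ₗ[ℝ] (Fin n → ℝ))
    (hc : ∀ k ∈ K, ∀ x ∈ K, c (brP k x) = k.1 • c x + k.2 (c x) - (x.1 • c k + x.2 (c k)))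
    (h0 : ∀ k ∈ K, k.1 = 0) :
    ∃ x0 : Fin n → ℝ, ∀ k ∈ K, ∀ l ∈ K, l.2 (c k - k.2 x0) = 0 := by
  obtain ⟨m, b, hb, hx⟩ := exists_frame (formP n) (formP_symm n) (formP_pos n) K
  let Q : LinearMap.BilinForm ℝ (Fin m → Fin n → ℝ) :=
    ∑ i, (dotE n).compl₁₂ (LinearMap.proj i) (LinearMap.proj i)
  have hQ : ∀ u w, Q u w = ∑ i, dotE n (u i) (w i) := fun u w => by
    simp [Q, LinearMap.sum_apply]
  let Lb : (Fin n → ℝ) →ₗ[ℝ] (Fin m → Fin n → ℝ) := LinearMap.pi fun i => (b i).2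
  obtain ⟨P, hP1, hP2⟩ := exists_proj Q (fun u w => by simp only [hQ, dotE_symm])
    (fun u hu => by
      obtain ⟨i, hi⟩ := Function.ne_iff.mp hu
      rw [hQ]
      exact Finset.sum_pos' (fun i _ => dotE_nonneg n _) ⟨i, Finset.mem_univ _, dotE_pos n _ hi⟩)
    (LinearMap.range Lb)
  obtain ⟨x0, hx0⟩ := hP1 fun i => c (b i)
  refine ⟨x0, ?_⟩
  let c' := c - actP x0
  have hc'a : ∀ k ∈ K, c' k = c k - k.2 x0 := fun k hk => by
    simp [c', actP_apply, h0 k hk]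
  have hPc : ∀ i, P (fun i => c (b i)) i = c' (b i) := fun i => by
    have := congrFun hx0 i
    simp only [Lb, LinearMap.pi_apply, Pi.sub_apply] at this
    rw [hc'a _ (hb i), this, sub_sub_cancel]
  have hc' : ∀ k ∈ K, ∀ x ∈ K, c' (brP k x) = k.2 (c' x) - x.2 (c' k) := fun k hk x hx => by
    simp only [c', LinearMap.sub_apply]
    rw [hc _ hk _ hx, actP_cocycle, h0 k hk, h0 x hx]
    simp only [map_sub]
    module
  have hsum : ∑ i, (b i).2 (c' (b i)) = 0 := by
    apply dotE_eq_zero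
    set y := ∑ i, (b i).2 (c' (b i)) with hy
    have h1 := hP2 (fun i => c (b i)) (Lb y) ⟨y, rfl⟩
    rw [hQ] at h1
    have hz : ∀ z, dotE n y z = ∑ i, dotE n ((b i).2 (c' (b i))) z := fun z => by
      rw [hy]
      simp
    rw [hz]
    simp only [soE_skew (hK _ (hb _)), Finset.sum_neg_distrib]
    rw [neg_eq_zero, ← h1]
    exact Finset.sum_congr rfl fun i _ => by rw [hPc]; rfl
  intro k hk
  rw [← hc'a k hk]
  let β : PA n →ₗ[ℝ] PA n →ₗ[ℝ] (Fin n → ℝ) :=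
    (LinearMap.id (R := ℝ) (M := Module.End ℝ (Fin n → ℝ))).compl₁₂ (LinearMap.snd ℝ _ _) c'
  have hβ : ∀ x y, β x y = x.2 (c' y) := fun x y => rfl
  have key := frame_skew (formP n) (formP_symm n) b K hb hx (brP k) (hbr k hk)
    (fun x y => brP_skew k x y (hK _ hk)) β
  have key2 : ∑ i, (b i).2 ((b i).2 (c' k)) = 0 := by
    have h1 : ∑ i, (β (b i) (brP k (b i)) + β (brP k (b i)) (b i)) =
        k.2 (∑ i, (b i).2 (c' (b i))) - ∑ i, (b i).2 ((b i).2 (c' k)) := by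
      rw [map_sum, ← Finset.sum_sub_distrib]
      refine Finset.sum_congr rfl fun i _ => ?_
      rw [hβ, hβ, hc' k hk _ (hb i), brP_apply]
      simp only [map_sub, LinearMap.sub_apply, Module.End.mul_apply]
      abel
    rw [key, hsum, map_zero, zero_sub] at h1
    exact neg_eq_zero.1 h1.symm
  have key3 : ∑ i, dotE n ((b i).2 (c' k)) ((b i).2 (c' k)) = 0 := by
    have h1 := congrArg (dotE n (c' k)) key2
    rw [map_sum, map_zero] at h1
    rw [← neg_eq_zero, ← h1, ← Finset.sum_neg_distrib]
    exact Finset.sum_congr rfl fun i _ => by rw [soE_skew (hK _ (hb i)), neg_neg]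
  rw [Finset.sum_eq_zero_iff_of_nonneg (fun i _ => dotE_nonneg n _)] at key3
  intro l hl
  rw [hx l hl]
  simp only [Prod.snd_sum, Prod.smul_snd, LinearMap.sum_apply, LinearMap.smul_apply]
  refine Finset.sum_eq_zero fun i _ => ?_
  rw [dotE_eq_zero n _ (key3 i (Finset.mem_univ _)), smul_zero]

/-- Reverse direction. -/
lemma wi_of_type {n : ℕ} (hn : 1 ≤ n) {g : Set (Module.End ℝ (Mink n))}
    (h : Set (Module.End ℝ (Fin n → ℝ))) (h0 : 0 ∈ h) (E : Submodule ℝ (Fin n → ℝ))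
    (ψ : Module.End ℝ (Fin n → ℝ) →ₗ[ℝ] (Fin n → ℝ))
    (hE : ∀ A ∈ h, ∀ x ∈ E, A x ∈ E) (hF : ∀ A ∈ h, ∀ y ∈ OC n E, A y = 0)
    (hsurj : ∀ y ∈ OC n E, ∃ A ∈ h, ψ A = y)
    (hgg : ∀ A ∈ h, ∀ X ∈ E, coElem 0 0 A (X + ψ A) ∈ g) : WeaklyIrred (minkB n) g := by
  obtain ⟨P, hP1, hP2⟩ := exists_proj (dotE n) (dotE_symm n) (dotE_pos n) E
  have hgE : ∀ X ∈ E, coElem 0 0 0 X ∈ g := fun X hX => by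
    simpa using hgg 0 h0 X hX
  have hgψ : ∀ A ∈ h, coElem 0 0 A (ψ A) ∈ g := fun A hA => by
    simpa using hgg A hA 0 E.zero_mem
  have hAE : ∀ A ∈ h, ∀ x, A x ∈ E := fun A hA x => by
    have h1 : A x = A (x - P x) := by rw [map_sub, hF A hA (P x) (hP2 x), sub_zero]
    rw [h1]
    exact hE A hA _ (hP1 x)
  have hEne : ∃ X ∈ E, X ≠ 0 := by
    by_contra! hc
    have h1 : ∀ y, y ∈ OC n E := fun y x hx => by rw [hc x hx, map_zero]
    have h2 : ∀ y : Fin n → ℝ, y = 0 := fun y => by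
      obtain ⟨A, hA, rfl⟩ := hsurj y (h1 y)
      have hA0 : A = 0 := LinearMap.ext fun x => hF A hA x (h1 x)
      rw [hA0, map_zero]
    have := congrFun (h2 fun _ => 1) ⟨0, hn⟩
    simp at this
  intro W hW hnd
  by_cases hu : ∃ w ∈ W, w.2.2 ≠ 0
  · right
    obtain ⟨w, hw, hu⟩ := hu
    obtain ⟨X, hX, hX0⟩ := hEne
    have hp : pvec n ∈ W := by
      have h1 := hW _ (hgE X hX) _ (hW _ (hgE X hX) w hw)
      have hne := (dotE_pos n X hX0).ne'
      have h2 := W.smul_mem (-(w.2.2 * dotE n X X)⁻¹) h1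
      convert h2 using 1
      simp only [coElem_apply]
      refine Prod.ext ?_ (Prod.ext ?_ ?_)
      · simp [pvec]; field_simp
      · simp [pvec]
      · simp [pvec]
    have hvp : ∀ v : ℝ, ((v, 0, 0) : Mink n) ∈ W := fun v => by
      have := W.smul_mem v hp
      simpa [pvec] using this
    have hEW : ∀ y ∈ E, ((0, y, 0) : Mink n) ∈ W := fun y hy => by
      have h1 := hW _ (hgE y hy) w hw
      have h2 := W.smul_mem (-(w.2.2)⁻¹) (W.sub_mem h1 (hvp (dotE n y w.2.1)))
      convert h2 using 1
      simp only [coElem_apply]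
      refine Prod.ext ?_ (Prod.ext ?_ ?_)
      · simp
      · simp [smul_smul, hu]
      · simp
    have hFW : ∀ y ∈ OC n E, ((0, y, 0) : Mink n) ∈ W := fun y hy => by
      obtain ⟨A, hA, rfl⟩ := hsurj y hy
      have h1 := hW _ (hgψ A hA) w hw
      have h2 := W.smul_mem (-(w.2.2)⁻¹) (W.sub_mem (W.sub_mem h1 (hvp (dotE n (ψ A) w.2.1)))
        (hEW _ (hAE A hA w.2.1)))
      convert h2 using 1
      simp only [coElem_apply]
      refine Prod.ext ?_ (Prod.ext ?_ ?_)
      · simp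
      · simp [smul_smul, hu]
      · simp
    have hall : ∀ y, ((0, y, 0) : Mink n) ∈ W := fun y => by
      have h1 := W.add_mem (hEW _ (hP1 y)) (hFW _ (hP2 y))
      simpa using h1
    have hq : ∀ u : ℝ, ((0, 0, u) : Mink n) ∈ W := fun u => by
      have h1 := W.smul_mem (u * (w.2.2)⁻¹) (W.sub_mem (W.sub_mem hw (hvp w.1)) (hall w.2.1))
      convert h1 using 1
      refine Prod.ext ?_ (Prod.ext ?_ ?_)
      · simp
      · simp
      · simp [mul_assoc, hu]
    rw [eq_top_iff]
    rintro ⟨v, x, u⟩ -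
    have h1 := W.add_mem (W.add_mem (hvp v) (hall x)) (hq u)
    simpa using h1
  · left
    push Not at hu
    have hvp : ∀ v : ℝ, ((v, 0, 0) : Mink n) ∈ W → v = 0 := fun v hv => by
      have h1 := hnd _ hv fun y hy => by simp [minkB_apply, hu y hy]
      exact congrArg Prod.fst h1
    rw [Submodule.eq_bot_iff]
    rintro ⟨v, x, u⟩ hw
    have hu0 : u = 0 := hu _ hw
    subst hu0
    have hxF : x ∈ OC n E := fun X hX => by
      rw [dotE_symm]
      apply hvp
      have h1 := hW _ (hgE X hX) _ hw
      simpa [coElem_apply] using h1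
    have hx0 : x = 0 := by
      obtain ⟨A, hA, hAx⟩ := hsurj x hxF
      apply dotE_eq_zero
      apply hvp
      have h1 := hW _ (hgψ A hA) _ hw
      simpa [coElem_apply, hF A hA x hxF, hAx] using h1
    subst hx0
    have := hvp v hw
    subst this
    rfl

/-- A submodule from a Lie subalgebra. -/
def IsLieSub.toSub {g : Set (Module.End ℝ V)} (h : IsLieSub g) :
    Submodule ℝ (Module.End ℝ V) where
  carrier := g
  zero_mem' := h.1
  add_mem' := fun {a b} ha hb => h.2.1 a ha b hb
  smul_mem' := fun c x hx => h.2.2.1 c x hx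

lemma IsLieSub.mem_toSub {g : Set (Module.End ℝ V)} (h : IsLieSub g) (x : Module.End ℝ V) :
    x ∈ h.toSub ↔ x ∈ g := Iff.rfl

/-- The structure of `g` without weak irreducibility. -/
lemma structure_g {n : ℕ} {g : Set (Module.End ℝ (Mink n))} (hsub : IsLieSub g)
    (hg : g ⊆ soRp n) :
    ∃ (E : Submodule ℝ (Fin n → ℝ)) (K : Submodule ℝ (PA n)) (c : PA n →ₗ[ℝ] (Fin n → ℝ)),
      (∀ k ∈ K, k.2 ∈ soE n) ∧ (∀ k ∈ K, ∀ x ∈ K, brP k x ∈ K) ∧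
      (∀ k ∈ K, c k ∈ OC n E) ∧
      (∀ k ∈ K, ∀ x ∈ E, k.2 x ∈ E) ∧
      (∀ k ∈ K, ∀ x ∈ K, c (brP k x) = k.1 • c x + k.2 (c x) - (x.1 • c k + x.2 (c k))) ∧
      (∀ a A X, coElem 0 a A X ∈ g ↔ (a, A) ∈ K ∧ X - c (a, A) ∈ E) := by
  let G := hsub.toSub
  let ι : (Fin n → ℝ) →ₗ[ℝ] Module.End ℝ (Mink n) :=
    { toFun := fun X => coElem 0 0 0 X
      map_add' := fun X Y => by
        have := coElem_comb 1 0 0 0 0 X Y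
        simpa using this.symm
      map_smul' := fun s X => by
        have h1 := coElem_comb s 0 0 0 0 0 X
        have h2 : coElem 0 0 0 (0 : Fin n → ℝ) = 0 := by
          refine LinearMap.ext fun w => ?_
          simp [coElem_apply]
        rw [h2] at h1
        simpa using h1.symm }
  have hι : ∀ X, ι X = coElem 0 0 0 X := fun X => rfl
  let E : Submodule ℝ (Fin n → ℝ) := G.comap ι
  have hE : ∀ X, X ∈ E ↔ coElem 0 0 0 X ∈ g := fun X => Iff.rfl
  obtain ⟨P, hP1, hP2⟩ := exists_proj (dotE n) (dotE_symm n) (dotE_pos n) E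
  have hPu : ∀ x u, u ∈ OC n E → x - u ∈ E → P x = u := fun x u hu hxu => by
    have h1 : P x - u ∈ OC n E := (OC n E).sub_mem (hP2 x) hu
    have h2 : P x - u ∈ E := by
      have := E.sub_mem hxu (hP1 x)
      simpa using this
    exact sub_eq_zero.1 (dotE_eq_zero n _ (h1 _ h2))
  let f : Module.End ℝ (Mink n) →ₗ[ℝ] PA n := (aOf n).prod (AOf n)
  have hf : ∀ a A X, f (coElem 0 a A X) = (a, A) := fun a A X => by
    simp [f, aOf_coElem, AOf_coElem]
  let K : Submodule ℝ (PA n) := G.map f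
  have hK : ∀ k, k ∈ K ↔ ∃ X, coElem 0 k.1 k.2 X ∈ g := fun k => by
    constructor
    · rintro ⟨F, hF, rfl⟩
      obtain ⟨a, A, hA, X, rfl⟩ := hg hF
      rw [hf]
      exact ⟨X, hF⟩
    · rintro ⟨X, hX⟩
      exact ⟨_, hX, hf _ _ _⟩
  have hso : ∀ a A X, coElem 0 a A X ∈ g → A ∈ soE n := fun a A X h => by
    obtain ⟨a', A', hA, X', he⟩ := hg h
    have := congrArg (AOf n) he
    rw [AOf_coElem, AOf_coElem] at this
    rwa [this]
  obtain ⟨c, hc⟩ := exists_factor G f (P ∘ₗ XOf n) (fun u hu h0 => by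
    obtain ⟨a, A, hA, X, rfl⟩ := hg hu
    rw [hf] at h0
    have ha : a = 0 := congrArg Prod.fst h0
    have hA0 : A = 0 := congrArg Prod.snd h0
    subst ha hA0
    rw [LinearMap.comp_apply, XOf_coElem]
    exact hPu X 0 (OC n E).zero_mem (by rw [sub_zero]; exact hu))
  have hcg : ∀ a A X, coElem 0 a A X ∈ g → c (a, A) = P X := fun a A X h => by
    have := hc _ h
    rwa [hf, LinearMap.comp_apply, XOf_coElem] at this
  have hbrg : ∀ a A X b B Y, coElem 0 a A X ∈ g → coElem 0 b B Y ∈ g →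
      coElem 0 0 (A * B - B * A) (a • Y + A Y - (b • X + B X)) ∈ g :=
    fun a A X b B Y h1 h2 => by
      rw [← coElem_bracket a b (hso _ _ _ h1) (hso _ _ _ h2)]
      exact hsub.2.2.2 _ h1 _ h2
  have hinv : ∀ k ∈ K, ∀ x ∈ E, k.2 x ∈ E := fun k hk x hx => by
    obtain ⟨X, hX⟩ := (hK k).1 hk
    have h1 := hbrg _ _ _ _ _ _ hX ((hE x).1 hx)
    have h2 : k.1 • x + k.2 x ∈ E := by
      rw [hE]
      simpa using h1
    have := E.sub_mem h2 (E.smul_mem k.1 hx)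
    simpa using this
  have hKso : ∀ k ∈ K, k.2 ∈ soE n := fun k hk => by
    obtain ⟨X, hX⟩ := (hK k).1 hk
    exact hso _ _ _ hX
  have hinvF : ∀ k ∈ K, ∀ x ∈ OC n E, k.2 x ∈ OC n E := fun k hk x hx y hy => by
    rw [soE_skew (hKso k hk), hx _ (hinv k hk y hy), neg_zero]
  refine ⟨E, K, c, hKso, fun k hk x hx => ?_, fun k hk => ?_, hinv, fun k hk x hx => ?_,
    fun a A X => ⟨fun h => ?_, ?_⟩⟩
  · obtain ⟨X, hX⟩ := (hK k).1 hk
    obtain ⟨Y, hY⟩ := (hK x).1 hx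
    exact (hK _).2 ⟨_, hbrg _ _ _ _ _ _ hX hY⟩
  · obtain ⟨X, hX⟩ := (hK k).1 hk
    have := hcg _ _ _ hX
    rw [Prod.mk.eta] at this
    rw [this]
    exact hP2 X
  · obtain ⟨X, hX⟩ := (hK k).1 hk
    obtain ⟨Y, hY⟩ := (hK x).1 hx
    have h1 : c k = P X := hcg _ _ _ hX
    have h2 : c x = P Y := hcg _ _ _ hY
    have h3 := hcg _ _ _ (hbrg _ _ _ _ _ _ hX hY)
    rw [brP_apply, h3, h1, h2]
    have hPX : P X ∈ OC n E := hP2 X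
    have hPY : P Y ∈ OC n E := hP2 Y
    apply hPu
    · exact (OC n E).sub_mem
        ((OC n E).add_mem ((OC n E).smul_mem _ hPY) (hinvF k hk _ hPY))
        ((OC n E).add_mem ((OC n E).smul_mem _ hPX) (hinvF x hx _ hPX))
    · have := E.sub_mem
        (E.add_mem (E.smul_mem k.1 (hP1 Y)) (hinv k hk _ (hP1 Y)))
        (E.add_mem (E.smul_mem x.1 (hP1 X)) (hinv x hx _ (hP1 X)))
      convert this using 1
      simp only [map_sub]
      module
  · refine ⟨(hK _).2 ⟨X, h⟩, ?_⟩
    rw [hcg _ _ _ h]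
    exact hP1 X
  · rintro ⟨h1, h2⟩
    obtain ⟨Y, hY⟩ := (hK _).1 h1
    have h3 : X - Y ∈ E := by
      have := hP1 Y
      rw [← hcg _ _ _ hY] at this
      have := E.sub_mem h2 this
      simpa using this
    have h4 := G.add_mem hY ((hE _).1 h3)
    have h5 := coElem_comb 1 a 0 A 0 Y (X - Y)
    simp only [one_smul, mul_zero, add_zero, add_sub_cancel] at h5
    rw [h5] at h4
    exact h4

lemma OC_bot_top {n : ℕ} (E : Submodule ℝ (Fin n → ℝ)) (h : OC n E = ⊥) (x : Fin n → ℝ) :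
    x ∈ E := by
  obtain ⟨P, hP1, hP2⟩ := exists_proj (dotE n) (dotE_symm n) (dotE_pos n) E
  have h1 : P x ∈ OC n E := hP2 x
  rw [h, Submodule.mem_bot] at h1
  have h2 := hP1 x
  rwa [h1, sub_zero] at h2

/-- The Bérard-Bergery–Ikemakhen classification: a subalgebra
`𝔤 ⊆ so(1,n+1)_{ℝp}` is weakly irreducible if and only if it is of one of the
four types `𝔤^{1,𝔥}`, `𝔤^{2,𝔥}`, `𝔤^{3,𝔥,φ}`, `𝔤^{4,𝔥,m,ψ}`. -/
theorem berard_bergery_ikemakhen (n : ℕ) (hn : 1 ≤ n)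
    (g : Set (Module.End ℝ (Mink n)))
    (hsub : IsLieSub g) (hg : g ⊆ soRp n) :
    WeaklyIrred (minkB n) g ↔
      ∃ h : Set (Module.End ℝ (Fin n → ℝ)), IsLieSub h ∧ h ⊆ soE n ∧
        (g = {F | ∃ a : ℝ, ∃ A ∈ h, ∃ X : Fin n → ℝ, F = coElem 0 a A X} ∨
         g = {F | ∃ A ∈ h, ∃ X : Fin n → ℝ, F = coElem 0 0 A X} ∨
         (∃ φ : Module.End ℝ (Fin n → ℝ) →ₗ[ℝ] ℝ,
            (∃ A ∈ h, A ≠ 0 ∧ ∀ B ∈ h, A * B = B * A) ∧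
            (∀ A ∈ h, ∀ B ∈ h, φ (A * B - B * A) = 0) ∧ (∃ A ∈ h, φ A ≠ 0) ∧
            g = {F | ∃ A ∈ h, ∃ X : Fin n → ℝ, F = coElem 0 (φ A) A X}) ∨
         (∃ E : Submodule ℝ (Fin n → ℝ),
          ∃ ψ : Module.End ℝ (Fin n → ℝ) →ₗ[ℝ] (Fin n → ℝ),
            (∀ A ∈ h, ∀ x ∈ E, A x ∈ E) ∧ (∀ A ∈ h, ∀ y ∈ OC n E, A y = 0) ∧
            (∃ Zc : Submodule ℝ (Module.End ℝ (Fin n → ℝ)),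
              (Zc : Set (Module.End ℝ (Fin n → ℝ)))
                  = {A | A ∈ h ∧ ∀ B ∈ h, A * B = B * A} ∧
              Module.finrank ℝ (OC n E) ≤ Module.finrank ℝ Zc) ∧
            (∀ A ∈ h, ψ A ∈ OC n E) ∧ (∀ y ∈ OC n E, ∃ A ∈ h, ψ A = y) ∧
            (∀ A ∈ h, ∀ B ∈ h, ψ (A * B - B * A) = 0) ∧
            g = {F | ∃ A ∈ h, ∃ X ∈ E, F = coElem 0 0 A (X + ψ A)})) := by

  constructor
  · intro hw
    obtain ⟨E, K, c, hKso, hbr, hcF, hinv, hcoc, hmem⟩ := structure_g hsub hg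
    have hinvF : ∀ k ∈ K, ∀ x ∈ OC n E, k.2 x ∈ OC n E := fun k hk x hx y hy => by
      rw [soE_skew (hKso k hk), hx _ (hinv k hk y hy), neg_zero]
    have hgset : ∀ F, F ∈ g ↔ ∃ a A X, (a, A) ∈ K ∧ X - c (a, A) ∈ E ∧ F = coElem 0 a A X := by
      intro F
      constructor
      · intro hF
        obtain ⟨a, A, hA, X, rfl⟩ := hg hF
        obtain ⟨h1, h2⟩ := (hmem _ _ _).1 hF
        exact ⟨a, A, X, h1, h2, rfl⟩
      · rintro ⟨a, A, X, h1, h2, rfl⟩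
        exact (hmem _ _ _).2 ⟨h1, h2⟩
    let H : Submodule ℝ (Module.End ℝ (Fin n → ℝ)) := K.map (LinearMap.snd ℝ _ _)
    have hH : ∀ A, A ∈ H ↔ ∃ a, (a, A) ∈ K := fun A => by simp [H]
    have hHso : (H : Set (Module.End ℝ (Fin n → ℝ))) ⊆ soE n := fun A hA => by
      obtain ⟨a, ha⟩ := (hH A).1 hA
      exact hKso _ ha
    have hHlie : IsLieSub (H : Set (Module.End ℝ (Fin n → ℝ))) :=
      ⟨H.zero_mem, fun _ h _ h' => H.add_mem h h', fun s _ h => H.smul_mem s h,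
        fun A hA B hB => by
          obtain ⟨a, ha⟩ := (hH A).1 hA
          obtain ⟨b, hb⟩ := (hH B).1 hB
          exact (hH _).2 ⟨0, hbr _ ha _ hb⟩⟩
    have hdotE : ∀ a A X, coElem 0 a A X ∈ g → ∀ y ∈ OC n E,
        dotE n X y = dotE n (c (a, A)) y := fun a A X h y hy => by
      have h1 := hy _ ((hmem _ _ _).1 h).2
      rw [dotE_symm, map_sub, LinearMap.sub_apply, sub_eq_zero] at h1
      exact h1
    refine ⟨H, hHlie, hHso, ?_⟩
    by_cases hcase : ∃ k ∈ K, k.1 ≠ 0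
    · obtain ⟨k0, hk0, hk01⟩ := hcase
      obtain ⟨x0, hx0⟩ := cocycle_one K hKso hbr c hcoc k0 hk0 hk01
      have hbot : OC n E = ⊥ := by
        apply wi_bot hg hw (OC n E) x0
        intro a A X hA h y hy
        have hk := ((hmem _ _ _).1 h).1
        refine ⟨hinvF _ hk y hy, ?_⟩
        rw [hdotE a A X h y hy, hx0 _ hk, actP_apply, map_add, LinearMap.add_apply, map_smul,
          LinearMap.smul_apply, soE_skew hA, smul_eq_mul, sub_eq_add_neg]
      have htop := OC_bot_top E hbot
      by_cases h10 : ((1, 0) : PA n) ∈ K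
      · left
        have hall : ∀ A ∈ H, ∀ a, (a, A) ∈ K := fun A hA a => by
          obtain ⟨a', ha'⟩ := (hH A).1 hA
          have := K.add_mem ha' (K.smul_mem (a - a') h10)
          simpa using this
        ext F
        rw [hgset]
        constructor
        · rintro ⟨a, A, X, h1, -, rfl⟩
          exact ⟨a, A, (hH A).2 ⟨a, h1⟩, X, rfl⟩
        · rintro ⟨a, A, hA, X, rfl⟩
          exact ⟨a, A, X, hall A hA a, htop _, rfl⟩
      · right; right; left
        obtain ⟨φ, hφ⟩ := exists_factor K (LinearMap.snd ℝ _ _) (LinearMap.fst ℝ _ _)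
          (fun k hk h2 => by
            by_contra h1
            apply h10
            have := K.smul_mem (k.1)⁻¹ hk
            convert this using 1
            refine Prod.ext ?_ ?_
            · exact (inv_mul_cancel₀ h1).symm
            · have h2' : k.2 = 0 := h2
              simp [h2'])
        have hφ' : ∀ a A, (a, A) ∈ K → φ A = a := fun a A h => hφ _ h
        have hHK : ∀ A ∈ H, (φ A, A) ∈ K := fun A hA => by
          obtain ⟨a, ha⟩ := (hH A).1 hA
          rwa [hφ' a A ha]
        have hφ0 : ∀ A ∈ (H : Set (Module.End ℝ (Fin n → ℝ))),
            ∀ B ∈ (H : Set (Module.End ℝ (Fin n → ℝ))), φ (A * B - B * A) = 0 :=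
          fun A hA B hB => hφ' _ _ (hbr _ (hHK A hA) _ (hHK B hB))
        have hk0H : k0.2 ∈ H := (hH _).2 ⟨k0.1, hk0⟩
        have hk0φ : φ k0.2 ≠ 0 := by rwa [hφ' k0.1 k0.2 hk0]
        refine ⟨φ, ?_, hφ0, ⟨k0.2, hk0H, hk0φ⟩, ?_⟩
        · obtain ⟨Z, hZ, hZc, hZφ⟩ := center_of_vanish hHlie hHso φ hφ0 hk0H
          refine ⟨Z, hZ, fun h0 => hk0φ ?_, hZc⟩
          rw [← hZφ, h0, map_zero]
        · ext F
          rw [hgset]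
          constructor
          · rintro ⟨a, A, X, h1, -, rfl⟩
            exact ⟨A, (hH A).2 ⟨a, h1⟩, X, by rw [hφ' a A h1]⟩
          · rintro ⟨A, hA, X, rfl⟩
            exact ⟨_, A, X, hHK A hA, htop _, rfl⟩
    · push Not at hcase
      right; right; right
      have hHK : ∀ A ∈ H, ((0, A) : PA n) ∈ K := fun A hA => by
        obtain ⟨a, ha⟩ := (hH A).1 hA
        have h0 : a = 0 := hcase _ ha
        rwa [h0] at ha
      obtain ⟨x0, hx0⟩ := cocycle_two K hKso hbr c hcoc hcase
      -- the part of `OC E` on which `h` acts without invariants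
      let I : Submodule ℝ (Fin n → ℝ) := ⨅ A : H, LinearMap.ker (A : Module.End ℝ (Fin n → ℝ))
      have hI : ∀ x, x ∈ I ↔ ∀ A ∈ H, A x = 0 := fun x => by simp [I]
      have hIinv : ∀ A ∈ H, ∀ y, A y ∈ OC n I := fun A hA y z hz => by
        rw [soE_skew (hHso hA), (hI z).1 hz A hA, map_zero, neg_zero]
      have hbot : OC n E ⊓ OC n I = ⊥ := by
        apply wi_bot hg hw _ x0
        rintro a A X hA h y ⟨hy, hy2⟩
        have hk := ((hmem _ _ _).1 h).1
        have ha : a = 0 := hcase _ hk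
        have hAH : A ∈ H := (hH A).2 ⟨a, hk⟩
        refine ⟨⟨hinvF _ hk y hy, hIinv A hAH y⟩, ?_⟩
        have h1 : c (a, A) - A x0 ∈ I := (hI _).2 fun B hB => hx0 _ hk _ (hHK B hB)
        have h2 := hy2 _ h1
        rw [dotE_symm, map_sub, LinearMap.sub_apply, sub_eq_zero] at h2
        rw [hdotE a A X h y hy, h2, soE_skew hA, ha, zero_mul, zero_sub]
      have hkill : ∀ A ∈ H, ∀ y ∈ OC n E, A y = 0 := fun A hA y hy => by
        have : A y ∈ OC n E ⊓ OC n I := ⟨hinvF _ (hHK A hA) y hy, hIinv A hA y⟩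
        rwa [hbot, Submodule.mem_bot] at this
      let ψ : Module.End ℝ (Fin n → ℝ) →ₗ[ℝ] (Fin n → ℝ) := c ∘ₗ LinearMap.inr ℝ _ _
      have hψ : ∀ A, ψ A = c (0, A) := fun A => rfl
      have hψF : ∀ A ∈ H, ψ A ∈ OC n E := fun A hA => hcF _ (hHK A hA)
      have hψ0 : ∀ A ∈ (H : Set (Module.End ℝ (Fin n → ℝ))),
          ∀ B ∈ (H : Set (Module.End ℝ (Fin n → ℝ))), ψ (A * B - B * A) = 0 :=
        fun A hA B hB => by
          have h1 := hcoc _ (hHK A hA) _ (hHK B hB)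
          rw [brP_apply] at h1
          rw [hψ, h1]
          simp only [zero_smul, zero_add, ← hψ]
          rw [hkill A hA _ (hψF B hB), hkill B hB _ (hψF A hA), sub_zero]
      have hsurj : ∀ y ∈ OC n E, ∃ A ∈ H, ψ A = y := by
        have hbot2 : OC n E ⊓ OC n (H.map ψ) = ⊥ := by
          apply wi_bot hg hw _ 0
          rintro a A X hA h y ⟨hy, hy2⟩
          have hk := ((hmem _ _ _).1 h).1
          have ha : a = 0 := hcase _ hk
          have hAH : A ∈ H := (hH A).2 ⟨a, hk⟩
          rw [hkill A hAH y hy]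
          refine ⟨Submodule.zero_mem _, ?_⟩
          have h2 := hy2 _ (Submodule.mem_map_of_mem hAH)
          rw [hdotE a A X h y hy, ha, dotE_symm, ← hψ, h2]
          simp
        intro y hy
        obtain ⟨P, hP1, hP2⟩ := exists_proj (dotE n) (dotE_symm n) (dotE_pos n) (H.map ψ)
        have hle : H.map ψ ≤ OC n E := by
          rintro _ ⟨A, hA, rfl⟩
          exact hψF A hA
        have h1 : P y ∈ OC n E ⊓ OC n (H.map ψ) := by
          refine ⟨?_, hP2 y⟩
          have := (OC n E).sub_mem hy (hle (hP1 y))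
          simpa using this
        rw [hbot2, Submodule.mem_bot] at h1
        have h2 := hP1 y
        rw [h1, sub_zero] at h2
        exact h2
      refine ⟨E, ψ, fun A hA x hx => hinv _ (hHK A hA) x hx, hkill, ?_, hψF, hsurj, hψ0, ?_⟩
      · let Zc : Submodule ℝ (Module.End ℝ (Fin n → ℝ)) :=
          { carrier := {A | A ∈ (H : Set (Module.End ℝ (Fin n → ℝ))) ∧
              ∀ B ∈ (H : Set (Module.End ℝ (Fin n → ℝ))), A * B = B * A}
            zero_mem' := ⟨H.zero_mem, fun B _ => by simp⟩
            add_mem' := fun {A A'} hA hA' => ⟨H.add_mem hA.1 hA'.1, fun B hB => by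
              rw [add_mul, mul_add, hA.2 B hB, hA'.2 B hB]⟩
            smul_mem' := fun s A hA => ⟨H.smul_mem s hA.1, fun B hB => by
              rw [smul_mul_assoc, mul_smul_comm, hA.2 B hB]⟩ }
        refine ⟨Zc, rfl, ?_⟩
        have hle : OC n E ≤ Zc.map ψ := fun y hy => by
          obtain ⟨A, hA, rfl⟩ := hsurj y hy
          obtain ⟨Z, hZ, hZc, hZψ⟩ := center_of_vanish hHlie hHso ψ hψ0 hA
          exact ⟨Z, ⟨hZ, hZc⟩, hZψ⟩
        exact (Submodule.finrank_mono hle).trans (Submodule.finrank_map_le ψ Zc)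
      · ext F
        rw [hgset]
        constructor
        · rintro ⟨a, A, X, h1, h2, rfl⟩
          have ha : a = 0 := hcase _ h1
          subst ha
          exact ⟨A, (hH A).2 ⟨0, h1⟩, _, h2, by rw [hψ, sub_add_cancel]⟩
        · rintro ⟨A, hA, X, hX, rfl⟩
          exact ⟨0, A, _, hHK A hA, by rw [hψ, add_sub_cancel_right]; exact hX, rfl⟩
  · rintro ⟨h, hl, hso, hty⟩
    have hfull : (∀ X, coElem 0 0 0 X ∈ g) → WeaklyIrred (minkB n) g := fun hX => by
      refine wi_of_type hn {0} rfl ⊤ 0 (fun _ _ _ _ => trivial) ?_ ?_ ?_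
      · rintro A rfl y -
        rfl
      · intro y hy
        have := dotE_eq_zero n y (hy y trivial)
        exact ⟨0, rfl, by rw [this]; rfl⟩
      · rintro A rfl X -
        simpa using hX X
    rcases hty with rfl | rfl | ⟨φ, -, -, -, rfl⟩ | ⟨E, ψ, h1, h2, -, -, h5, -, rfl⟩
    · exact hfull fun X => ⟨0, 0, hl.1, X, rfl⟩
    · exact hfull fun X => ⟨0, hl.1, X, rfl⟩
    · exact hfull fun X => ⟨0, hl.1, X, by rw [map_zero]⟩
    · exact wi_of_type hn h hl.1 E ψ h1 h2 h5 fun A hA X hX => ⟨A, hA, X, hX, rfl⟩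

end Weyl
end
end
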